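/- arXiv:2411.01840 — 2 statements merged into one kernel-verified Lean document; each statement's English description precedes it below -/
import Mathlib

section
/- Let A ∈ ℂⁿˣⁿ admit a factorization A = U D Uᵀ where U is a real orthogonal n×n matrix and D is a complex diagonal matrix, and suppose the real part Re(A) is invertible. Let K ⊂ ℝⁿ be compact and let 1 ≤ p < ∞. Then there exists a lattice Λ ⊂ ℝⁿ such that the complex linear span of the family of functions {t ↦ exp(t·Aλ) : λ ∈ Λ} is dense in Lᵖ(K) (complex-valued, with respect to Lebesgue measure restricted to K). -/
/-!
Write `L t = Aᵀ t`, so that `t · A λ = ∑ j, L t j * λ j`, and take `Λ = c ℤⁿ` for a small `c > 0`.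
The exponentials restricted to `K` are closed under multiplication, so their span is a subalgebra
`B` of `C(K, ℂ)`. It is not closed under conjugation, so Stone-Weierstrass does not apply directly.
However, for small `c` each generator `exp (c L_j)` is uniformly close to `1` on the compact set
`K`, and the power series of the logarithm expresses `c L_j` as a uniform limit of polynomials in
it (`mem_of_exp_mem`). Hence the closure of `B` contains every `L_j`. The hypotheses make `A`
invertible (`isUnit_of_isUnit_re`), so the closure contains the real coordinate functions, and
Stone-Weierstrass shows that `B` is dense in `C(K, ℂ)` (`dense_span_exp`). Finally `C(K, ℂ)` is
dense in `Lᵖ(K)` because `p < ∞`.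
-/

open Matrix MeasureTheory
open scoped ENNReal

/-- A (full-rank) lattice in `ℝⁿ`: the image of `ℤⁿ` under an invertible real matrix. -/
def IsLattice (n : ℕ) (Λ : Set (Fin n → ℝ)) : Prop :=
  ∃ M : Matrix (Fin n) (Fin n) ℝ, IsUnit M ∧
    Λ = {x | ∃ k : Fin n → ℤ, x = M.mulVec fun i => (k i : ℝ)}

/-- A closed subalgebra of `C(X, ℂ)` containing `exp f`, with `f` uniformly small, contains `f`:
the logarithm series converges uniformly. -/
lemma mem_of_exp_mem {X : Type*} [TopologicalSpace X] [CompactSpace X]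
    (B : Subalgebra ℂ C(X, ℂ)) (hB : IsClosed (B : Set C(X, ℂ))) (f g : C(X, ℂ))
    (hg : g ∈ B) (hfg : ∀ x, g x = Complex.exp (f x)) (hf : ∀ x, ‖f x‖ ≤ 1 / 4) : f ∈ B := by
  have hsmall : ∀ x, ‖(g - 1) x‖ ≤ 1 / 2 := fun x => by
    have h := Complex.norm_exp_sub_one_le (x := f x) (by linarith [hf x])
    have h2 := hf x
    simp only [ContinuousMap.sub_apply, ContinuousMap.one_apply, hfg]
    linarith
  have hnorm : ‖g - 1‖ ≤ 1 / 2 := (ContinuousMap.norm_le _ (by norm_num)).2 hsmall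
  let s : ℕ → C(X, ℂ) := fun m => ((-1 : ℂ) ^ (m + 1) / m) • (g - 1) ^ m
  have hpow : ∀ m : ℕ, ‖(g - 1) ^ m‖ ≤ (1 / 2 : ℝ) ^ m := fun m =>
    (ContinuousMap.norm_le _ (by positivity)).2 fun x => by
      rw [ContinuousMap.pow_apply, norm_pow]
      exact pow_le_pow_left₀ (norm_nonneg _) (hsmall x) m
  have hs : Summable s := by
    refine Summable.of_norm_bounded (g := fun m : ℕ => (1 / 2 : ℝ) ^ m)
      (summable_geometric_of_lt_one (by norm_num) (by norm_num)) fun m => ?_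
    have h1 : ‖((-1 : ℂ) ^ (m + 1) / m)‖ ≤ 1 := by
      rcases Nat.eq_zero_or_pos m with rfl | hm
      · simp
      · have : (1 : ℝ) ≤ m := by exact_mod_cast hm
        simpa using inv_le_one_of_one_le₀ this
    calc ‖s m‖ ≤ ‖((-1 : ℂ) ^ (m + 1) / m)‖ * ‖(g - 1) ^ m‖ := norm_smul_le _ _
      _ ≤ 1 * (1 / 2 : ℝ) ^ m := mul_le_mul h1 (hpow m) (norm_nonneg _) zero_le_one
      _ = _ := one_mul _
  have hsum : ∑' m, s m = f := by
    ext x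
    have h1 := ContinuousMap.hasSum_apply hs.hasSum x
    have h2 := Complex.hasSum_taylorSeries_log (z := (g - 1) x)
      (lt_of_le_of_lt (hsmall x) (by norm_num))
    have h3 : (fun m => s m x) = fun m : ℕ => (-1 : ℂ) ^ (m + 1) * ((g - 1) x) ^ m / m := by
      funext m
      simp only [s, ContinuousMap.smul_apply, ContinuousMap.pow_apply, smul_eq_mul]
      ring
    rw [h3] at h1
    rw [h1.unique h2]
    have him : |(f x).im| ≤ 1 / 4 := (Complex.abs_im_le_norm _).trans (hf x)
    have hpi := Real.pi_gt_three
    rw [abs_le] at him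
    have : 1 + (g - 1) x = Complex.exp (f x) := by simp [hfg]
    rw [this, Complex.log_exp (by linarith) (by linarith)]
  rw [← hsum]
  exact hB.mem_of_tendsto hs.hasSum (Filter.Eventually.of_forall fun t =>
    B.sum_mem fun m _ => B.smul_mem (B.pow_mem (B.sub_mem hg B.one_mem) m) _)

/-- Since `Re A = U (Re D) Uᵀ`, the diagonal entries of `D` have nonzero real part, hence are
nonzero. -/
lemma isUnit_of_isUnit_re (n : ℕ) (A : Matrix (Fin n) (Fin n) ℂ)
    (U : Matrix (Fin n) (Fin n) ℝ) (hU : Uᵀ * U = 1)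
    (D : Matrix (Fin n) (Fin n) ℂ) (hD : D.IsDiag)
    (hA : A = U.map Complex.ofReal * D * (U.map Complex.ofReal)ᵀ)
    (hRe : IsUnit (A.map Complex.re)) : IsUnit A := by
  have hUdet : U.det ≠ 0 := by
    intro h
    have := congrArg Matrix.det hU
    simp [h] at this
  have hre : A.map Complex.re = U * D.map Complex.re * Uᵀ := by
    ext i j
    simp [hA, Matrix.mul_apply, Complex.mul_re]
  have hDre : (D.map Complex.re).det ≠ 0 := by
    intro h
    rw [Matrix.isUnit_iff_isUnit_det, hre] at hRe
    simp [h] at hRe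
  obtain ⟨d, rfl⟩ : ∃ d, D = Matrix.diagonal d := ⟨_, hD.diagonal_diag.symm⟩
  have hd : ∀ i, (d i).re ≠ 0 := by
    have h : (Matrix.diagonal d).map Complex.re = Matrix.diagonal fun i => (d i).re := by
      rw [Matrix.diagonal_map (by simp)]
    rw [h, Matrix.det_diagonal, Finset.prod_ne_zero_iff] at hDre
    exact fun i => hDre i (Finset.mem_univ i)
  have hUc : (U.map Complex.ofReal).det ≠ 0 := by
    have h := (Complex.ofRealHom.map_det U)
    have h' : (U.map Complex.ofReal).det = (U.det : ℂ) := h.symm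
    rw [h']
    exact_mod_cast hUdet
  rw [Matrix.isUnit_iff_isUnit_det, isUnit_iff_ne_zero, hA, Matrix.det_mul, Matrix.det_mul,
    Matrix.det_transpose, Matrix.det_diagonal]
  refine mul_ne_zero (mul_ne_zero hUc (Finset.prod_ne_zero_iff.2 fun i _ h => hd i ?_)) hUc
  simp [h]

/-- The exponential `t ↦ exp (t · A λ)` as a continuous function on `K`. -/
noncomputable def expMap {n : ℕ} (A : Matrix (Fin n) (Fin n) ℂ) (K : Set (Fin n → ℝ))
    (lam : Fin n → ℝ) : C(K, ℂ) where
  toFun t := Complex.exp ((fun i => ((t.1 i : ℝ) : ℂ)) ⬝ᵥ A.mulVec fun i => ((lam i : ℝ) : ℂ))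
  continuous_toFun := by
    have h : ∀ i, Continuous fun t : K => ((t.1 i : ℝ) : ℂ) := fun i =>
      Complex.continuous_ofReal.comp ((continuous_apply i).comp continuous_subtype_val)
    simp only [dotProduct]
    fun_prop

/-- The `j`-th coordinate of `Aᵀ t` as a continuous function of `t ∈ K`. -/
noncomputable def linMap {n : ℕ} (A : Matrix (Fin n) (Fin n) ℂ) (K : Set (Fin n → ℝ))
    (j : Fin n) : C(K, ℂ) where
  toFun t := ((fun i => ((t.1 i : ℝ) : ℂ)) ᵥ* A) j
  continuous_toFun := by
    have h : ∀ i, Continuous fun t : K => ((t.1 i : ℝ) : ℂ) := fun i =>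
      Complex.continuous_ofReal.comp ((continuous_apply i).comp continuous_subtype_val)
    simp only [Matrix.vecMul, dotProduct]
    fun_prop

/-- The exponentials with frequencies in `c ℤⁿ` have dense span in `C(K, ℂ)`, provided `c` is so
small that each `c (Aᵀ t)_j` is bounded by `1 / 4` on `K`. -/
lemma dense_span_exp {n : ℕ} (A : Matrix (Fin n) (Fin n) ℂ) (hA : IsUnit A)
    (K : Set (Fin n → ℝ)) [CompactSpace K] (c : ℝ) (hc : 0 < c)
    (hbound : ∀ j t, ‖((c : ℂ) • linMap A K j) t‖ ≤ 1 / 4) :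
    Dense (Submodule.span ℂ
      (Set.range fun k : Fin n → ℤ => expMap A K fun i => c * (k i : ℝ)) : Set C(K, ℂ)) := by
  -- `k ↦ exp (t · A (c k))` is multiplicative, so the span of its range is a subalgebra.
  let φ : Multiplicative (Fin n → ℤ) →* C(K, ℂ) :=
    { toFun := fun k => expMap A K fun i => c * ((Multiplicative.toAdd k) i : ℝ)
      map_one' := by
        ext t
        simp [expMap, dotProduct, Matrix.mulVec]
      map_mul' := fun k l => by
        ext t
        simp only [expMap, ContinuousMap.coe_mk, ContinuousMap.mul_apply, ← Complex.exp_add,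
          ← dotProduct_add, ← Matrix.mulVec_add]
        congr 3
        funext i
        simp [mul_add] }
  have hrange : (Set.range fun k : Fin n → ℤ => expMap A K fun i => c * (k i : ℝ))
      = (MonoidHom.mrange φ : Set C(K, ℂ)) := by
    ext f
    simp only [Set.mem_range, SetLike.mem_coe, MonoidHom.mem_mrange]
    exact ⟨fun ⟨k, hk⟩ => ⟨Multiplicative.ofAdd k, hk⟩, fun ⟨k, hk⟩ => ⟨k.toAdd, hk⟩⟩
  let B : Subalgebra ℂ C(K, ℂ) := Algebra.adjoin ℂ (MonoidHom.mrange φ : Set C(K, ℂ))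
  have hspan : (Submodule.span ℂ
      (Set.range fun k : Fin n → ℤ => expMap A K fun i => c * (k i : ℝ)) : Set C(K, ℂ))
      = (B : Set C(K, ℂ)) := by
    rw [hrange, ← Subalgebra.coe_toSubmodule, Algebra.adjoin_eq_span, Submonoid.closure_eq]
  rw [hspan, dense_iff_closure_eq, ← Subalgebra.topologicalClosure_coe]
  have hlin : ∀ j, linMap A K j ∈ B.topologicalClosure := by
    intro j
    have h1 : (c : ℂ) • linMap A K j ∈ B.topologicalClosure := by
      refine mem_of_exp_mem _ B.isClosed_topologicalClosure _
        (φ (Multiplicative.ofAdd (Pi.single j 1)))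
        (B.le_topologicalClosure (Algebra.subset_adjoin ⟨_, rfl⟩)) (fun t => ?_) (hbound j)
      change Complex.exp _ = _
      have : (fun i => ((c * (((Pi.single j 1 : Fin n → ℤ) i : ℤ) : ℝ) : ℝ) : ℂ))
          = Pi.single j (c : ℂ) := by
        funext i
        by_cases h : i = j
        · subst h; simp
        · simp [h]
      simp only [toAdd_ofAdd]
      rw [this, Matrix.dotProduct_mulVec, dotProduct_single]
      simp [linMap, mul_comm]
    have h2 := B.topologicalClosure.smul_mem h1 ((c : ℂ)⁻¹)
    rwa [smul_smul, inv_mul_cancel₀ (by exact_mod_cast hc.ne'), one_smul] at h2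
  let χ : Fin n → C(K, ℂ) := fun i => ⟨fun t => ((t.1 i : ℝ) : ℂ),
    Complex.continuous_ofReal.comp ((continuous_apply i).comp continuous_subtype_val)⟩
  have hχ : ∀ i, χ i ∈ B.topologicalClosure := by
    intro i
    have h : χ i = ∑ j, (A⁻¹ j i) • linMap A K j := by
      ext t
      have h1 : ((fun i => ((t.1 i : ℝ) : ℂ)) ᵥ* A) ᵥ* A⁻¹ = fun i => ((t.1 i : ℝ) : ℂ) := by
        rw [Matrix.vecMul_vecMul, Matrix.mul_nonsing_inv _ ((Matrix.isUnit_iff_isUnit_det _).1 hA),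
          Matrix.vecMul_one]
      have h2 := congrFun h1 i
      simp only [χ, ContinuousMap.coe_mk, ContinuousMap.sum_apply, ContinuousMap.smul_apply,
        linMap, smul_eq_mul]
      rw [← h2]
      conv_lhs => rw [Matrix.vecMul, dotProduct]
      exact Finset.sum_congr rfl fun j _ => mul_comm _ _
    rw [h]
    exact sum_mem fun j _ => B.topologicalClosure.smul_mem (hlin j) _
  have hstar : star (Set.range χ) ⊆ Set.range χ := by
    rintro f ⟨i, hi⟩
    refine ⟨i, ?_⟩
    rw [← star_star f, ← hi]
    ext t
    simp [χ]
  have hsep : (StarAlgebra.adjoin ℂ (Set.range χ)).SeparatesPoints := by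
    intro x y hxy
    obtain ⟨i, hi⟩ : ∃ i, x.1 i ≠ y.1 i := by
      by_contra! h
      exact hxy (Subtype.ext (funext h))
    refine ⟨χ i, ⟨χ i, StarAlgebra.subset_adjoin ℂ _ ⟨i, rfl⟩, rfl⟩, ?_⟩
    simpa [χ] using hi
  have htop := ContinuousMap.starSubalgebra_topologicalClosure_eq_top_of_separatesPoints _ hsep
  have hle : (StarAlgebra.adjoin ℂ (Set.range χ)).toSubalgebra ≤ B.topologicalClosure := by
    rw [StarAlgebra.adjoin_toSubalgebra, Set.union_eq_self_of_subset_right hstar]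
    refine Algebra.adjoin_le ?_
    rintro _ ⟨i, rfl⟩
    exact hχ i
  refine Set.eq_univ_of_forall fun f => ?_
  have hf : f ∈ (StarAlgebra.adjoin ℂ (Set.range χ)).topologicalClosure := htop ▸ trivial
  exact closure_minimal (s := ((StarAlgebra.adjoin ℂ (Set.range χ) : StarSubalgebra ℂ C(K, ℂ)) :
    Set C(K, ℂ))) hle B.isClosed_topologicalClosure hf

/-- Lemma 5.6 (`Lᵖ(K)` version): if `A = U D Uᵀ` with `U` real orthogonal and `D`
complex diagonal, and `Re(A)` is invertible, then there is a lattice `Λ ⊂ ℝⁿ`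
such that the span of `t ↦ exp(t·Aλ)`, `λ ∈ Λ`, is dense in `Lᵖ(K)` for `1 ≤ p < ∞`. -/
theorem diagonal_complex_density_nonsingular_Lp
    (n : ℕ) (A : Matrix (Fin n) (Fin n) ℂ)
    (U : Matrix (Fin n) (Fin n) ℝ) (hU : Uᵀ * U = 1)
    (D : Matrix (Fin n) (Fin n) ℂ) (hD : D.IsDiag)
    (hA : A = U.map Complex.ofReal * D * (U.map Complex.ofReal)ᵀ)
    (hRe : IsUnit (A.map Complex.re))
    (K : Set (Fin n → ℝ)) (hK : IsCompact K)
    (p : ℝ≥0∞) [Fact (1 ≤ p)] (hp : p ≠ ⊤) :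
    ∃ Λ : Set (Fin n → ℝ), IsLattice n Λ ∧
      Dense (↑(Submodule.span ℂ
          {F : Lp ℂ p (volume.restrict K) |
            ∃ lam ∈ Λ, (F : (Fin n → ℝ) → ℂ) =ᵐ[volume.restrict K]
              fun t => Complex.exp ((fun i => ((t i : ℝ) : ℂ)) ⬝ᵥ
                A.mulVec fun i => ((lam i : ℝ) : ℂ))})
        : Set (Lp ℂ p (volume.restrict K))) := by
  have hAu := isUnit_of_isUnit_re n A U hU D hD hA hRe
  have : CompactSpace K := isCompact_iff_compactSpace.1 hK
  obtain ⟨C, hC0, hC⟩ : ∃ C : ℝ, 0 ≤ C ∧ ∀ j, ‖linMap A K j‖ ≤ C :=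
    ⟨∑ j, ‖linMap A K j‖, Finset.sum_nonneg fun _ _ => norm_nonneg _, fun j =>
      Finset.single_le_sum (f := fun j => ‖linMap A K j‖) (fun _ _ => norm_nonneg _)
        (Finset.mem_univ j)⟩
  set c : ℝ := 1 / (4 * (C + 1)) with hcdef
  have hc : 0 < c := by positivity
  have hbound : ∀ j t, ‖((c : ℂ) • linMap A K j) t‖ ≤ 1 / 4 := by
    intro j t
    rw [ContinuousMap.smul_apply, norm_smul, Complex.norm_real, Real.norm_of_nonneg hc.le]
    have h1 := ((linMap A K j).norm_coe_le_norm t).trans (hC j)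
    calc c * ‖linMap A K j t‖ ≤ c * (C + 1) := by gcongr; linarith
      _ = 1 / 4 := by rw [hcdef]; field_simp
  have hdense := dense_span_exp A hAu K c hc hbound
  refine ⟨{x | ∃ k : Fin n → ℤ, x = (c • (1 : Matrix (Fin n) (Fin n) ℝ)).mulVec
    fun i => (k i : ℝ)}, ⟨c • 1, ?_, rfl⟩, ?_⟩
  · rw [Matrix.isUnit_iff_isUnit_det, isUnit_iff_ne_zero, Matrix.det_smul, Matrix.det_one, mul_one]
    exact pow_ne_zero _ hc.ne'
  have hmeas : MeasurableSet K := hK.measurableSet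
  have : IsFiniteMeasure (volume.restrict K) := isFiniteMeasure_restrict.2 hK.measure_ne_top
  -- `Lp` over the subtype `K` is reached by the isometry `J`; an isometry reflects density.
  let ν : Measure K := volume.comap Subtype.val
  have hmp : MeasurePreserving (Subtype.val : K → Fin n → ℝ) ν (volume.restrict K) :=
    measurePreserving_subtype_coe hmeas
  have : IsFiniteMeasure ν := by
    refine ⟨?_⟩
    rw [← Set.preimage_univ (f := (Subtype.val : K → Fin n → ℝ)),
      hmp.measure_preimage MeasurableSet.univ.nullMeasurableSet]
    exact measure_lt_top _ _
  let J := Lp.compMeasurePreservingₗᵢ (E := ℂ) (p := p) ℂ (Subtype.val : K → Fin n → ℝ) hmp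
  have hD2 := (ContinuousMap.toLp_denseRange ℂ ν ℂ hp).dense_image
    (ContinuousMap.toLp p ν ℂ).continuous hdense
  set S := {F : Lp ℂ p (volume.restrict K) |
            ∃ lam ∈ {x | ∃ k : Fin n → ℤ, x = (c • (1 : Matrix (Fin n) (Fin n) ℝ)).mulVec
                fun i => (k i : ℝ)}, (F : (Fin n → ℝ) → ℂ) =ᵐ[volume.restrict K]
              fun t => Complex.exp ((fun i => ((t i : ℝ) : ℂ)) ⬝ᵥ
                A.mulVec fun i => ((lam i : ℝ) : ℂ))} with hS
  have hlift : ∀ k : Fin n → ℤ, ∃ F ∈ S,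
      J F = ContinuousMap.toLp p ν ℂ (expMap A K fun i => c * (k i : ℝ)) := by
    intro k
    set e : (Fin n → ℝ) → ℂ := fun t => Complex.exp ((fun i => ((t i : ℝ) : ℂ)) ⬝ᵥ
      A.mulVec fun i => ((c * (k i : ℝ) : ℝ) : ℂ)) with he
    have hcont : Continuous e := by
      simp only [he, dotProduct]
      fun_prop
    obtain ⟨R, hR⟩ := hK.exists_bound_of_continuousOn hcont.continuousOn
    have hmem : MemLp e p (volume.restrict K) :=
      MemLp.of_bound hcont.aestronglyMeasurable R
        ((ae_restrict_iff' hmeas).2 (Filter.Eventually.of_forall hR))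
    refine ⟨hmem.toLp e, ⟨fun i => c * (k i : ℝ), ⟨k, ?_⟩, hmem.coeFn_toLp⟩, ?_⟩
    · funext i
      simp [Matrix.smul_mulVec]
    · apply Lp.ext
      refine (Lp.coeFn_compMeasurePreserving (hmem.toLp e) hmp).trans ?_
      refine Filter.EventuallyEq.trans ?_ (ContinuousMap.coeFn_toLp ν _).symm
      exact hmp.quasiMeasurePreserving.ae_eq_comp hmem.coeFn_toLp
  have hsub : (ContinuousMap.toLp p ν ℂ) '' (Submodule.span ℂ
      (Set.range fun k : Fin n → ℤ => expMap A K fun i => c * (k i : ℝ)) : Set C(K, ℂ))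
      ⊆ J '' (Submodule.span ℂ S : Set _) := by
    rintro _ ⟨f, hf, rfl⟩
    have hle : Submodule.span ℂ
        (Set.range fun k : Fin n → ℤ => expMap A K fun i => c * (k i : ℝ))
        ≤ ((Submodule.span ℂ S).map J.toLinearMap).comap
          (ContinuousMap.toLp p ν ℂ : C(K, ℂ) →L[ℂ] Lp ℂ p ν).toLinearMap := by
      rw [Submodule.span_le]
      rintro _ ⟨k, rfl⟩
      obtain ⟨F, hF, hJ⟩ := hlift k
      exact ⟨F, Submodule.subset_span hF, hJ⟩
    exact hle hf
  have hD3 := hD2.mono hsub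
  rw [dense_iff_closure_eq, J.isometry.isEmbedding.isInducing.closure_eq_preimage_closure_image,
    hD3.closure_eq, Set.preimage_univ]
end

section
/- Let A ∈ ℂⁿˣⁿ be an invertible matrix admitting a factorization A = U D Uᵀ where U is a real orthogonal n×n matrix and D is a complex diagonal matrix, and let K ⊂ ℝⁿ be compact. Then there exists a lattice Λ ⊂ ℝⁿ such that the complex linear span of the family of functions {t ↦ exp(t·Aλ) : λ ∈ Λ} is dense in L²(K) (complex-valued, with respect to Lebesgue measure restricted to K). -/
/-!
Take `Λ = c U ℤⁿ` with `c > 0` small. In the coordinates `s = Uᵀ t` the exponential attached to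
`λ = c U k` is `exp (∑ j, k j * (c d_j s_j))`, where the `d_j ≠ 0` are the diagonal entries of `D`.
These functions are closed under multiplication, so the uniform closure `S` on `K` of their span
is a closed subalgebra of `C(K, ℂ)`. It need not be closed under conjugation, hence
Stone-Weierstrass does not apply to the exponentials themselves.

However, `c` can be chosen so small that `‖exp (c d_j s_j) - 1‖ ≤ 1/2` on `K`; then the Taylor
series of `log (1 + z)` at `z = exp (c d_j s_j) - 1` converges uniformly on `K` and shows that
`c d_j s_j`, hence the *real* coordinate `s_j`, lies in `S` (`mem_of_exp_mem`). The coordinates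
`s_j` are self-adjoint and separate points, so Stone-Weierstrass gives `S = C(K, ℂ)`
(`eq_top_of_real_separating`, `closure_span_exp_eq_top`). Since continuous functions are
dense in `L²(K)` and uniform approximation on a set of finite measure implies `L²`
approximation, the span is dense in `L²(K)` (`dense_span_of_uniform`).
-/

open Matrix MeasureTheory

/-- A closed subalgebra containing `exp w`, with `w` uniformly small, contains `w`:
the series of `log (1 + z)` at `z = exp w - 1` converges uniformly. -/
theorem mem_of_exp_mem_s6 {X : Type*} [TopologicalSpace X] [CompactSpace X]
    (S : Subalgebra ℂ C(X, ℂ)) (hS : IsClosed (S : Set C(X, ℂ)))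
    (w e : C(X, ℂ)) (hw : ∀ x, ‖w x‖ ≤ 1 / 4) (he : e ∈ S)
    (hew : ∀ x, e x = Complex.exp (w x)) : w ∈ S := by
  have hz : ∀ x, ‖(e - 1) x‖ ≤ 1 / 2 := by
    intro x
    have h := Complex.norm_exp_sub_one_le (x := w x) (by linarith [hw x])
    simp only [ContinuousMap.sub_apply, ContinuousMap.one_apply, hew]
    linarith [hw x]
  let f : ℕ → C(X, ℂ) := fun m => ((-1 : ℂ) ^ (m + 1) / m) • (e - 1) ^ m
  have hfS : ∀ m, f m ∈ S := fun m => S.smul_mem (S.pow_mem (S.sub_mem he S.one_mem) m) _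
  have hsum : Summable f := by
    refine Summable.of_norm_bounded (g := fun m => (1 / 2 : ℝ) ^ m)
      (summable_geometric_of_lt_one (by norm_num) (by norm_num)) fun m => ?_
    rw [ContinuousMap.norm_le _ (by positivity)]
    intro x
    have h1 : ‖(-1 : ℂ) ^ (m + 1) / m‖ ≤ 1 := by
      rcases Nat.eq_zero_or_pos m with rfl | hm
      · simp
      · have : (1 : ℝ) ≤ m := by exact_mod_cast hm
        simp only [norm_div, norm_pow, norm_neg, norm_one, one_pow, Complex.norm_natCast]
        exact (div_le_one (by linarith)).2 this
    simp only [f, ContinuousMap.smul_apply, ContinuousMap.pow_apply, norm_smul, norm_pow]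
    calc _ ≤ 1 * (1 / 2 : ℝ) ^ m := by
          gcongr
          exact hz x
      _ = _ := one_mul _
  have hlim : HasSum f w := by
    obtain ⟨g, hg⟩ := hsum
    have : g = w := by
      ext x
      have h1 := ContinuousMap.hasSum_apply hg x
      have h2 := Complex.hasSum_taylorSeries_log (z := (e - 1) x) (by linarith [hz x])
      have h3 : Complex.log (1 + (e - 1) x) = w x := by
        have him := abs_le.1 ((Complex.abs_im_le_norm (w x)).trans (hw x))
        have hpi := Real.pi_gt_three
        simp only [ContinuousMap.sub_apply, ContinuousMap.one_apply, hew, add_sub_cancel]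
        exact Complex.log_exp (by linarith) (by linarith)
      rw [h3] at h2
      refine h1.unique (h2.congr_fun ?_)
      intro m
      simp only [f, ContinuousMap.smul_apply, ContinuousMap.pow_apply, smul_eq_mul]
      ring
    rwa [this] at hg
  exact hS.mem_of_tendsto hlim (Filter.Eventually.of_forall fun s => S.sum_mem fun m _ => hfS m)

/-- Stone-Weierstrass for a closed complex subalgebra that is not assumed closed under
conjugation but contains a separating family of self-adjoint functions. -/
theorem eq_top_of_real_separating {X ι : Type*} [TopologicalSpace X] [CompactSpace X]
    (S : Subalgebra ℂ C(X, ℂ)) (hS : IsClosed (S : Set C(X, ℂ)))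
    (s : ι → C(X, ℂ)) (hsS : ∀ i, s i ∈ S) (hreal : ∀ i, star (s i) = s i)
    (hsep : ∀ x y, (∀ i, s i x = s i y) → x = y) : S = ⊤ := by
  have hle : (StarAlgebra.adjoin ℂ (Set.range s)).toSubalgebra ≤ S := by
    rw [StarAlgebra.adjoin_toSubalgebra]
    refine Algebra.adjoin_le ?_
    rintro f (⟨i, rfl⟩ | ⟨i, hi⟩)
    · exact hsS i
    · have : f = s i := by rw [← star_star f, ← hi, hreal]
      exact this ▸ hsS i
  have htop := ContinuousMap.starSubalgebra_topologicalClosure_eq_top_of_separatesPoints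
    (StarAlgebra.adjoin ℂ (Set.range s)) (by
      intro x y hxy
      by_contra hcon
      refine hxy (hsep x y fun i => ?_)
      by_contra hne
      exact hcon ⟨s i, ⟨s i, StarAlgebra.subset_adjoin ℂ _ ⟨i, rfl⟩, rfl⟩, hne⟩)
  rw [eq_top_iff]
  intro f _
  have hf : f ∈ (StarAlgebra.adjoin ℂ (Set.range s)).topologicalClosure := by
    rw [htop]; trivial
  exact closure_minimal (show ((StarAlgebra.adjoin ℂ (Set.range s) : Set C(X, ℂ))) ⊆ S from hle)
    hS hf

/-- If `w i = a i • s i` with `a i ≠ 0`, the `s i` real-valued and separating points, and the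
`w i` uniformly small, then the exponentials `exp (∑ i, k i * w i)`, `k ∈ ℤⁿ`, have uniformly
dense span. -/
theorem closure_span_exp_eq_top {X ι : Type*} [TopologicalSpace X] [CompactSpace X] [Fintype ι]
    (s : ι → C(X, ℂ)) (hreal : ∀ i, star (s i) = s i)
    (hsep : ∀ x y, (∀ i, s i x = s i y) → x = y)
    (a : ι → ℂ) (ha : ∀ i, a i ≠ 0) (hw : ∀ i x, ‖a i * s i x‖ ≤ 1 / 4)
    (E : (ι → ℤ) → C(X, ℂ))
    (hE : ∀ k x, E k x = Complex.exp (∑ i, (k i : ℂ) * (a i * s i x))) (g : C(X, ℂ)) :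
    g ∈ closure (Submodule.span ℂ (Set.range E) : Set C(X, ℂ)) := by
  classical
  let M : Submonoid C(X, ℂ) :=
    { carrier := Set.range E
      one_mem' := ⟨0, by ext x; simp [hE]⟩
      mul_mem' := by
        rintro _ _ ⟨k, rfl⟩ ⟨l, rfl⟩
        refine ⟨k + l, ?_⟩
        ext x
        simp [hE, ← Complex.exp_add, add_mul, Finset.sum_add_distrib] }
  have hspan : Subalgebra.toSubmodule (Algebra.adjoin ℂ (Set.range E)) =
      Submodule.span ℂ (Set.range E) := by
    rw [Algebra.adjoin_eq_span]
    exact congrArg (fun N : Submonoid C(X, ℂ) => Submodule.span ℂ (N : Set C(X, ℂ)))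
      M.closure_eq
  let S := (Algebra.adjoin ℂ (Set.range E)).topologicalClosure
  have hS : IsClosed (S : Set C(X, ℂ)) := Subalgebra.isClosed_topologicalClosure _
  have hsS : ∀ i, s i ∈ S := by
    intro i
    have h1 : a i • s i ∈ S := by
      refine mem_of_exp_mem_s6 S hS (a i • s i) (E (Pi.single i 1)) (fun x => hw i x)
        (Subalgebra.le_topologicalClosure _ (Algebra.subset_adjoin ⟨_, rfl⟩)) fun x => ?_
      rw [hE, Finset.sum_eq_single i]
      · simp
      · intro j _ hj
        simp [hj]
      · simp
    have h2 := S.smul_mem h1 (a i)⁻¹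
    rwa [inv_smul_smul₀ (ha i)] at h2
  have htop : S = ⊤ := eq_top_of_real_separating S hS s hsS hreal hsep
  have hg : g ∈ S := by rw [htop]; trivial
  rw [← hspan]
  exact hg

/-- Uniform density on a compact set `K` implies density in `L²(K)`. -/
theorem dense_span_of_uniform {α ι : Type*} [TopologicalSpace α] [NormalSpace α] [T2Space α]
    [MeasurableSpace α] [BorelSpace α] [SecondCountableTopology α]
    (K : Set α) (hK : IsCompact K) (μ : Measure α) [IsFiniteMeasure (μ.restrict K)]
    [(μ.restrict K).WeaklyRegular] (E : ι → C(α, ℂ))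
    (hE : ∀ g : C(K, ℂ), g ∈ closure (Submodule.span ℂ
      (Set.range fun i => (E i).restrict K) : Set C(K, ℂ))) :
    Dense (Submodule.span ℂ {F : Lp ℂ 2 (μ.restrict K) | ∃ i, F =ᵐ[μ.restrict K] E i} :
        Set (Lp ℂ 2 (μ.restrict K))) := by
  have : CompactSpace K := isCompact_iff_compactSpace.1 hK
  set V := Submodule.span ℂ {F : Lp ℂ 2 (μ.restrict K) | ∃ i, F =ᵐ[μ.restrict K] E i} with hV
  have hmem : ∀ᵐ x ∂μ.restrict K, x ∈ K := ae_restrict_mem hK.measurableSet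
  have hlift : ∀ p ∈ Submodule.span ℂ (Set.range fun i => (E i).restrict K),
      ∃ F ∈ V, ∀ᵐ x ∂μ.restrict K, ∀ hx : x ∈ K, F x = p ⟨x, hx⟩ := by
    intro p hp
    induction hp using Submodule.span_induction with
    | mem p hp =>
      obtain ⟨i, rfl⟩ := hp
      obtain ⟨C, hC⟩ := hK.exists_bound_of_continuousOn (E i).continuous.continuousOn
      have hL : MemLp (E i) 2 (μ.restrict K) :=
        MemLp.of_bound (E i).continuous.aestronglyMeasurable C (hmem.mono hC)
      exact ⟨hL.toLp _, Submodule.subset_span ⟨i, hL.coeFn_toLp⟩,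
        hL.coeFn_toLp.mono fun x hx _ => hx⟩
    | zero =>
      exact ⟨0, V.zero_mem, (Lp.coeFn_zero ℂ 2 (μ.restrict K)).mono fun x hx _ => hx⟩
    | add p q _ _ ihp ihq =>
      obtain ⟨F, hF, hFp⟩ := ihp
      obtain ⟨G, hG, hGq⟩ := ihq
      refine ⟨F + G, V.add_mem hF hG, ?_⟩
      filter_upwards [hFp, hGq, Lp.coeFn_add F G] with x h1 h2 h3 hx
      rw [h3, Pi.add_apply, h1 hx, h2 hx, ContinuousMap.add_apply]
    | smul c p _ ih =>
      obtain ⟨F, hF, hFp⟩ := ih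
      refine ⟨c • F, V.smul_mem c hF, ?_⟩
      filter_upwards [hFp, Lp.coeFn_smul c F] with x h1 h2 hx
      simp [h2, h1 hx]
  have hsub : Set.range (BoundedContinuousFunction.toLp (E := ℂ) 2 (μ.restrict K) ℂ) ⊆
      closure (V : Set (Lp ℂ 2 (μ.restrict K))) := by
    rintro _ ⟨g, rfl⟩
    rw [Metric.mem_closure_iff]
    intro ε hε
    set m : ℝ := (measureUnivNNReal (μ.restrict K) : ℝ) ^ (2 : ENNReal).toReal⁻¹ with hm
    have hm0 : 0 ≤ m := by positivity
    obtain ⟨p, hp, hgp⟩ := Metric.mem_closure_iff.1 (hE (g.toContinuousMap.restrict K))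
      (ε / (m + 1)) (by positivity)
    obtain ⟨F, hF, hFp⟩ := hlift p hp
    refine ⟨F, hF, ?_⟩
    rw [dist_eq_norm]
    refine (Lp.norm_le_of_ae_bound (C := ε / (m + 1)) (by positivity) ?_).trans_lt ?_
    · filter_upwards [hFp, hmem, BoundedContinuousFunction.coeFn_toLp 2 (μ.restrict K) ℂ g,
        Lp.coeFn_sub (BoundedContinuousFunction.toLp 2 (μ.restrict K) ℂ g) F] with x h1 hx h2 h3
      rw [h3, Pi.sub_apply, h2, h1 hx, ← dist_eq_norm]
      exact (ContinuousMap.dist_apply_le_dist (f := g.toContinuousMap.restrict K) (g := p)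
        ⟨x, hx⟩).trans hgp.le
    · rw [← hm, mul_div_assoc', div_lt_iff₀ (by positivity)]
      nlinarith
  have hd := BoundedContinuousFunction.toLp_denseRange ℂ (μ.restrict K) (p := 2) ℂ (by simp)
  exact dense_closure.1 (Dense.mono hsub hd)

/-- Lemma 5.7: if `A` is an invertible complex matrix of the form `A = U D Uᵀ`
with `U` real orthogonal and `D` complex diagonal (the real part of `A` may be
singular), then there is a lattice `Λ ⊂ ℝⁿ` such that the span of
`t ↦ exp(t·Aλ)`, `λ ∈ Λ`, is dense in `L²(K)`. -/
theorem diagonal_complex_density_singular_L2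
    (n : ℕ) (A : Matrix (Fin n) (Fin n) ℂ) (hAinv : IsUnit A)
    (U : Matrix (Fin n) (Fin n) ℝ) (hU : Uᵀ * U = 1)
    (D : Matrix (Fin n) (Fin n) ℂ) (hD : D.IsDiag)
    (hA : A = U.map Complex.ofReal * D * (U.map Complex.ofReal)ᵀ)
    (K : Set (Fin n → ℝ)) (hK : IsCompact K) :
    ∃ Λ : Set (Fin n → ℝ), IsLattice n Λ ∧
      Dense (↑(Submodule.span ℂ
          {F : Lp ℂ 2 (volume.restrict K) |
            ∃ lam ∈ Λ, (F : (Fin n → ℝ) → ℂ) =ᵐ[volume.restrict K]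
              fun t => Complex.exp ((fun i => ((t i : ℝ) : ℂ)) ⬝ᵥ
                A.mulVec fun i => ((lam i : ℝ) : ℂ))})
        : Set (Lp ℂ 2 (volume.restrict K))) := by
  classical
  have : CompactSpace K := isCompact_iff_compactSpace.1 hK
  have : IsFiniteMeasure (volume.restrict K) := ⟨by simpa using hK.measure_lt_top⟩
  have hUU : U * Uᵀ = 1 := mul_eq_one_comm.1 hU
  have hd : ∀ j, D j j ≠ 0 := by
    have hdet : IsUnit A.det := (Matrix.isUnit_iff_isUnit_det A).1 hAinv
    have hDd : D = Matrix.diagonal fun j => D j j := (hD.diagonal_diag).symm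
    have hne := hdet.ne_zero
    rw [hA, det_mul, det_mul, hDd, det_diagonal] at hne
    intro j
    exact Finset.prod_ne_zero_iff.1 (mul_ne_zero_iff.1 (mul_ne_zero_iff.1 hne).1).2 j
      (Finset.mem_univ j)
  -- the rotated coordinates `s = Uᵀ t`
  let s : Fin n → C(Fin n → ℝ, ℂ) := fun j =>
    ⟨fun t => ((Uᵀ.mulVec t j : ℝ) : ℂ), by
      simp only [Matrix.mulVec, dotProduct]; fun_prop⟩
  let sK : Fin n → C(K, ℂ) := fun j => (s j).restrict K
  obtain ⟨B, hB0, hB⟩ : ∃ B : ℝ, 0 ≤ B ∧ ∀ j x, ‖D j j * sK j x‖ ≤ B := by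
    refine ⟨∑ j, ‖D j j • sK j‖, by positivity, fun j x => ?_⟩
    exact ((D j j • sK j).norm_coe_le_norm x).trans
      (Finset.single_le_sum (f := fun j => ‖D j j • sK j‖) (fun _ _ => norm_nonneg _)
        (Finset.mem_univ j))
  set c : ℝ := 1 / (4 * (B + 1)) with hc
  have hc0 : 0 < c := by positivity
  have hcB : c * B ≤ 1 / 4 := by
    rw [hc, div_mul_eq_mul_div, one_mul, div_le_div_iff₀ (by positivity) (by norm_num)]
    linarith
  have hphase : ∀ (t : Fin n → ℝ) (k : Fin n → ℤ),
      (fun i => ((t i : ℝ) : ℂ)) ⬝ᵥ A.mulVec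
        (fun i => (((c • U).mulVec (fun i => (k i : ℝ)) i : ℝ) : ℂ)) =
      ∑ j, (k j : ℂ) * ((c * D j j) * s j t) := by
    intro t k
    have h1 : (fun i => (((c • U).mulVec (fun i => (k i : ℝ)) i : ℝ) : ℂ)) =
        (c : ℂ) • (U.map Complex.ofReal).mulVec (fun i => (k i : ℂ)) := by
      ext i
      simp [Matrix.mulVec, dotProduct, Finset.mul_sum, mul_assoc]
    have h2 : (U.map Complex.ofReal)ᵀ * U.map Complex.ofReal = 1 := by
      have := congrArg (fun N : Matrix (Fin n) (Fin n) ℝ => N.map Complex.ofRealHom) hU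
      simp only [Matrix.map_mul, Matrix.transpose_map, Matrix.map_one _ (map_zero _) (map_one _)]
        at this
      exact this
    have h3 : A.mulVec ((c : ℂ) • (U.map Complex.ofReal).mulVec (fun i => (k i : ℂ))) =
        (c : ℂ) • (U.map Complex.ofReal).mulVec (D.mulVec fun i => (k i : ℂ)) := by
      rw [Matrix.mulVec_smul, hA, Matrix.mulVec_mulVec, Matrix.mul_assoc, h2, Matrix.mul_one,
        Matrix.mulVec_mulVec]
    have h4 : (fun i => ((t i : ℝ) : ℂ)) ᵥ* U.map Complex.ofReal = fun j => s j t := by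
      ext j
      simp [s, Matrix.vecMul, Matrix.mulVec, dotProduct, mul_comm]
    have h5 : ∀ j, D.mulVec (fun i => (k i : ℂ)) j = D j j * k j := by
      intro j
      conv_lhs => rw [← hD.diagonal_diag, Matrix.mulVec_diagonal]
      rfl
    rw [h1, h3, dotProduct_smul, Matrix.dotProduct_mulVec, h4, dotProduct, smul_eq_mul,
      Finset.mul_sum]
    refine Finset.sum_congr rfl fun j _ => ?_
    rw [h5]
    ring
  let E : (Fin n → ℤ) → C(Fin n → ℝ, ℂ) := fun k =>
    ⟨fun t => Complex.exp (∑ j, (k j : ℂ) * ((c * D j j) * s j t)), by fun_prop⟩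
  have hunif := closure_span_exp_eq_top sK
    (fun j => by ext x; simp [sK, s])
    (fun x y h => by
      have hxy : Uᵀ.mulVec x.1 = Uᵀ.mulVec y.1 := by
        ext j
        exact Complex.ofReal_injective (h j)
      have := congrArg U.mulVec hxy
      simp only [Matrix.mulVec_mulVec, hUU, Matrix.one_mulVec] at this
      exact Subtype.ext this)
    (fun j => (c : ℂ) * D j j)
    (fun j => mul_ne_zero (by exact_mod_cast hc0.ne') (hd j))
    (fun j x => by
      rw [mul_assoc, norm_mul, Complex.norm_real, Real.norm_of_nonneg hc0.le]
      exact (mul_le_mul_of_nonneg_left (hB j x) hc0.le).trans hcB)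
    (fun k => (E k).restrict K) (fun k x => rfl)
  refine ⟨{x | ∃ k : Fin n → ℤ, x = (c • U).mulVec fun i => (k i : ℝ)}, ⟨c • U, ?_, rfl⟩, ?_⟩
  · have : IsUnit U := ⟨⟨U, Uᵀ, hUU, hU⟩, rfl⟩
    exact this.smul (Units.mk0 c hc0.ne')
  · refine (dense_span_of_uniform K hK volume E hunif).mono (Submodule.span_mono ?_)
    rintro F ⟨k, hF⟩
    refine ⟨_, ⟨k, rfl⟩, hF.trans (Filter.Eventually.of_forall fun t => ?_)⟩
    exact congrArg Complex.exp (hphase t k).symm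
end
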